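/- arXiv:1810.05985 — 7 statements merged into one kernel-verified Lean document; each statement's English description precedes it below -/
import Mathlib

section
/- Let S be a subset of ℤⁿ, let H be the subgroup of ℤⁿ generated by S, and for an additive homomorphism χ : H →+ ℤ define σ_χ^⊥ := { m ∈ ℝⁿ | for all s ∈ S, ⟨m, s⟩ = χ(s) }. For two homomorphisms χ, χ' : H →+ ℤ, the subsets σ_χ^⊥ + ℤⁿ and σ_{χ'}^⊥ + ℤⁿ of ℝⁿ are equal (equivalently, σ_χ^⊥ and σ_{χ'}^⊥ have the same image in the torus ℝⁿ/ℤⁿ) if and only if there exists m ∈ ℤⁿ such that χ(s) − χ'(s) = ⟨m, s⟩ for all s ∈ H. In particular, the translate p(σ_χ^⊥) of the torus depends only on the image of χ in the cokernel of the restriction map Hom(ℤⁿ, ℤ) → Hom(H, ℤ). -/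
/-- The affine subspace `σ_χ^⊥ = { m ∈ ℝⁿ | ⟨m, s⟩ = χ(s) for all s ∈ S }` attached to a
subset `S ⊆ ℤⁿ` and an additive homomorphism `χ` on the subgroup generated by `S`. -/
def perpSet (n : ℕ) (S : Set (Fin n → ℤ))
    (χ : ↥(AddSubgroup.closure S) →+ ℤ) : Set (Fin n → ℝ) :=
  {m | ∀ (s : Fin n → ℤ) (hs : s ∈ S),
    ∑ i, m i * (s i : ℝ) = (χ ⟨s, AddSubgroup.subset_closure hs⟩ : ℝ)}

/-- The saturation of a subset of `ℝⁿ` under translation by the lattice `ℤⁿ`; two subsets have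
the same image in the torus `ℝⁿ/ℤⁿ` iff their saturations agree. -/
def plusLattice (n : ℕ) (A : Set (Fin n → ℝ)) : Set (Fin n → ℝ) :=
  {x | ∃ m ∈ A, ∃ z : Fin n → ℤ, x = m + fun i => (z i : ℝ)}

theorem perpSet_nonempty (n : ℕ) (S : Set (Fin n → ℤ))
    (χ : ↥(AddSubgroup.closure S) →+ ℤ) : (perpSet n S χ).Nonempty := by
  have hB : Module.Baer ℤ ℝ := Module.Baer.of_divisible ℝ
  obtain ⟨f, hf⟩ := Module.Baer.extension_property_addMonoidHom hB
    (AddSubgroup.closure S).subtype Subtype.val_injective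
    ((Int.castAddHom ℝ).comp χ)
  refine ⟨fun i => f (Pi.single i 1), fun s hs => ?_⟩
  have h1 := DFunLike.congr_fun hf ⟨s, AddSubgroup.subset_closure hs⟩
  simp only [AddMonoidHom.comp_apply, AddSubgroup.subtype_apply, Int.coe_castAddHom] at h1
  rw [← h1]
  have h2 : s = ∑ i, s i • (Pi.single i 1 : Fin n → ℤ) := pi_eq_sum_univ' s
  conv_rhs => rw [h2]
  rw [map_sum]
  refine Finset.sum_congr rfl fun i _ => ?_
  rw [map_zsmul, zsmul_eq_mul, mul_comm]

theorem plusLattice_subset (n : ℕ) (S : Set (Fin n → ℤ))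
    (χ χ' : ↥(AddSubgroup.closure S) →+ ℤ) (m : Fin n → ℤ)
    (hm : ∀ s : ↥(AddSubgroup.closure S), χ s - χ' s = ∑ i, m i * (s : Fin n → ℤ) i) :
    plusLattice n (perpSet n S χ) ⊆ plusLattice n (perpSet n S χ') := by
  rintro x ⟨a, ha, z, rfl⟩
  refine ⟨fun i => a i - m i, fun s hs => ?_, z + m, ?_⟩
  · have h1 := ha s hs
    have h2 := hm ⟨s, AddSubgroup.subset_closure hs⟩
    have h3 := congrArg (Int.cast : ℤ → ℝ) h2
    push_cast at h3
    simp only [sub_mul, Finset.sum_sub_distrib]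
    linarith
  · funext i
    simp

/-- `σ_χ^⊥` and `σ_{χ'}^⊥` have the same image in the torus `ℝⁿ/ℤⁿ` iff `χ − χ'` is the
restriction to `H` of a homomorphism `⟨m, ·⟩` with `m ∈ ℤⁿ`. -/
theorem stmt_1 (n : ℕ) (S : Set (Fin n → ℤ))
    (χ χ' : ↥(AddSubgroup.closure S) →+ ℤ) :
    plusLattice n (perpSet n S χ) = plusLattice n (perpSet n S χ') ↔
      ∃ m : Fin n → ℤ, ∀ s : ↥(AddSubgroup.closure S),
        χ s - χ' s = ∑ i, m i * (s : Fin n → ℤ) i := by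
  constructor
  · intro h
    obtain ⟨a, ha⟩ := perpSet_nonempty n S χ
    have hmem : a ∈ plusLattice n (perpSet n S χ) := ⟨a, ha, 0, by funext i; simp⟩
    rw [h] at hmem
    obtain ⟨b, hb, z, hz⟩ := hmem
    refine ⟨z, ?_⟩
    rintro ⟨s, hs⟩
    induction hs using AddSubgroup.closure_induction with
    | mem s hs =>
      have h1 := ha s hs
      have h2 := hb s hs
      rw [hz] at h1
      simp only [Pi.add_apply, add_mul, Finset.sum_add_distrib] at h1
      have h3 : ((χ ⟨s, AddSubgroup.subset_closure hs⟩ : ℤ) : ℝ)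
          - χ' ⟨s, AddSubgroup.subset_closure hs⟩ = ∑ i, (z i : ℝ) * (s i : ℝ) := by linarith
      exact_mod_cast h3
    | zero =>
      have h0 : (⟨0, AddSubgroup.zero_mem _⟩ : ↥(AddSubgroup.closure S)) = 0 := rfl
      have e1 := map_zero χ
      have e2 := map_zero χ'
      rw [← h0] at e1 e2
      simp [e1, e2]
    | add x y hx hy ihx ihy =>
      have e1 := map_add χ ⟨x, hx⟩ ⟨y, hy⟩
      have e2 := map_add χ' ⟨x, hx⟩ ⟨y, hy⟩
      simp only [AddMemClass.mk_add_mk] at e1 e2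
      simp only [Pi.add_apply, mul_add, Finset.sum_add_distrib]
      simp only [e1, e2]
      simp only at ihx ihy
      linarith
    | neg x hx ihx =>
      have e1 : χ ⟨-x, neg_mem hx⟩ = - χ ⟨x, hx⟩ := map_neg χ ⟨x, hx⟩
      have e2 : χ' ⟨-x, neg_mem hx⟩ = - χ' ⟨x, hx⟩ := map_neg χ' ⟨x, hx⟩
      simp only [Pi.neg_apply, mul_neg, Finset.sum_neg_distrib]
      simp only [e1, e2]
      simp only at ihx
      linarith
  · rintro ⟨m, hm⟩
    refine Set.Subset.antisymm (plusLattice_subset n S χ χ' m hm)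
      (plusLattice_subset n S χ' χ (-m) fun s => ?_)
    simp only [Pi.neg_apply, neg_mul, Finset.sum_neg_distrib, ← hm s]
    ring
end

section
/- Let H be a subgroup of ℤⁿ. Then the cokernel of the restriction homomorphism Hom(ℤⁿ, ℤ) →+ Hom(H, ℤ), φ ↦ φ|_H, is a finite group, and its cardinality equals the index of H in its saturation H̄ := { x ∈ ℤⁿ | q • x ∈ H for some positive integer q }. -/
/-- The saturation `H̄ = { x ∈ ℤⁿ | q • x ∈ H for some positive integer q }` of a subgroup
`H ≤ ℤⁿ`. -/
def saturationSubgroup (n : ℕ) (H : AddSubgroup (Fin n → ℤ)) :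
    AddSubgroup (Fin n → ℤ) where
  carrier := {x | ∃ q : ℕ, 0 < q ∧ q • x ∈ H}
  zero_mem' := ⟨1, one_pos, by simpa using H.zero_mem⟩
  add_mem' := by
    rintro a b ⟨q, hq, ha⟩ ⟨r, hr, hb⟩
    refine ⟨q * r, Nat.mul_pos hq hr, ?_⟩
    rw [smul_add]
    exact H.add_mem
      (by rw [mul_comm, mul_smul]; exact AddSubgroup.nsmul_mem H ha r)
      (by rw [mul_smul]; exact AddSubgroup.nsmul_mem H hb q)
  neg_mem' := by
    rintro a ⟨q, hq, ha⟩
    exact ⟨q, hq, by simpa [smul_neg] using H.neg_mem ha⟩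

/-- The restriction homomorphism `Hom(ℤⁿ, ℤ) →+ Hom(H, ℤ)`, `φ ↦ φ|_H`. -/
def resHom (n : ℕ) (H : AddSubgroup (Fin n → ℤ)) :
    ((Fin n → ℤ) →+ ℤ) →+ (↥H →+ ℤ) where
  toFun φ := φ.comp H.subtype
  map_zero' := rfl
  map_add' _ _ := rfl

/-- The cokernel of the restriction map `Hom(ℤⁿ, ℤ) → Hom(H, ℤ)` is finite, of cardinality
equal to the index of `H` in its saturation. -/
theorem stmt_2 (n : ℕ) (H : AddSubgroup (Fin n → ℤ)) :
    Finite ((↥H →+ ℤ) ⧸ (resHom n H).range) ∧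
      Nat.card ((↥H →+ ℤ) ⧸ (resHom n H).range) =
        (H.addSubgroupOf (saturationSubgroup n H)).index := by
  classical
  obtain ⟨m, bM, bN, f, a, snf⟩ :=
    Submodule.smithNormalForm (Pi.basisFun ℤ (Fin n)) (AddSubgroup.toIntSubmodule H)
  let S : Module.Basis.SmithNormalForm (AddSubgroup.toIntSubmodule H) (Fin n) m :=
    ⟨bM, bN, f, a, snf⟩
  have ha : ∀ i, a i ≠ 0 := by
    intro i h
    have h1 := snf i
    rw [h, zero_smul] at h1
    exact bN.ne_zero i (Subtype.ext h1)
  haveI hne : ∀ i, NeZero (a i).natAbs := fun i => ⟨Int.natAbs_ne_zero.mpr (ha i)⟩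
  -- the evaluation map on `Hom(H, ℤ)`
  let Ψ : (↥H →+ ℤ) →+ (∀ i, ZMod (a i).natAbs) :=
    { toFun := fun g i => ((g (bN i) : ℤ) : ZMod (a i).natAbs)
      map_zero' := by ext i; exact Int.cast_zero
      map_add' := by intro x y; ext i; exact Int.cast_add _ _ }
  let Φ : ↥(saturationSubgroup n H) →+ (∀ i, ZMod (a i).natAbs) :=
    { toFun := fun x i => ((bM.repr (x : Fin n → ℤ) (f i) : ℤ) : ZMod (a i).natAbs)
      map_zero' := by ext i; simp
      map_add' := by intro x y; ext i; simp }
  have hz : ∀ i (z : ℤ), ((z : ℤ) : ZMod (a i).natAbs) = 0 ↔ a i ∣ z := by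
    intro i z
    rw [ZMod.intCast_zmod_eq_zero_iff_dvd, Int.natAbs_dvd]
  have hΨs : Function.Surjective Ψ := by
    intro v
    choose c hc using fun i => ZMod.intCast_surjective (v i)
    refine ⟨(bN.constr ℤ c).toAddMonoidHom, ?_⟩
    ext i
    change (((bN.constr ℤ c) (bN i) : ℤ) : ZMod (a i).natAbs) = v i
    rw [Module.Basis.constr_basis, hc]
  have hΨk : Ψ.ker = (resHom n H).range := by
    ext g
    rw [AddMonoidHom.mem_ker, AddMonoidHom.mem_range]
    constructor
    · intro h
      have h1 : ∀ i, a i ∣ g (bN i) := fun i => (hz i _).1 (congrFun h i)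
      choose c hc using h1
      let φ := bM.constr ℤ (Function.extend f c 0)
      refine ⟨φ.toAddMonoidHom, ?_⟩
      have key : (φ ∘ₗ (AddSubgroup.toIntSubmodule H).subtype) = 
          (AddMonoidHom.toIntLinearMap g : (AddSubgroup.toIntSubmodule H) →ₗ[ℤ] ℤ) := by
        apply bN.ext
        intro i
        change φ (bN i : Fin n → ℤ) = g (bN i)
        rw [snf i, map_smul, hc, Module.Basis.constr_basis, f.injective.extend_apply, smul_eq_mul]
      ext x
      exact LinearMap.congr_fun key x
    · rintro ⟨φ, rfl⟩
      ext i
      refine (hz i _).2 ?_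
      change a i ∣ φ (bN i : Fin n → ℤ)
      rw [snf i, map_zsmul, smul_eq_mul]
      exact dvd_mul_right _ _
  have hΦs : Function.Surjective Φ := by
    intro v
    choose c hc using fun i => ZMod.intCast_surjective (v i)
    have hmem : ∀ i, bM (f i) ∈ saturationSubgroup n H := by
      intro i
      refine ⟨(a i).natAbs, Int.natAbs_pos.mpr (ha i), ?_⟩
      have h1 : a i • bM (f i) ∈ H := by
        have h2 := (bN i).2
        rw [snf i] at h2
        exact h2
      rw [← natCast_zsmul]
      rcases Int.natAbs_eq (a i) with h | h
      · rw [← h]; exact h1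
      · rw [eq_neg_iff_add_eq_zero, add_comm, ← eq_neg_iff_add_eq_zero] at h
        rw [h, neg_smul]; exact H.neg_mem h1
    refine ⟨⟨∑ i, c i • bM (f i), AddSubgroup.sum_mem _ fun i _ =>
      AddSubgroup.zsmul_mem _ (hmem i) _⟩, ?_⟩
    ext i
    change ((bM.repr (∑ j, c j • bM (f j)) (f i) : ℤ) : ZMod (a i).natAbs) = v i
    rw [← hc i]
    congr 1
    simp [Finsupp.single_apply, -zsmul_eq_mul]
  have hΦk : Φ.ker = H.addSubgroupOf (saturationSubgroup n H) := by
    ext ⟨x, q, hq, hx⟩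
    rw [AddMonoidHom.mem_ker, AddSubgroup.mem_addSubgroupOf]
    change _ ↔ x ∈ H
    constructor
    · intro h
      have h1 : ∀ i, a i ∣ bM.repr x (f i) := fun i => (hz i _).1 (congrFun h i)
      choose c hc using h1
      have hx2 : x = ((∑ i, c i • bN i : AddSubgroup.toIntSubmodule H) : Fin n → ℤ) := by
        apply bM.repr.injective
        ext j
        by_cases hj : j ∈ Set.range f
        · obtain ⟨i, rfl⟩ := hj
          rw [hc]
          simp [snf, Finsupp.single_apply, mul_comm, -zsmul_eq_mul]
        · have h3 := S.repr_eq_zero_of_notMem_range ⟨q • x, hx⟩ hj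
          have h4 := S.repr_eq_zero_of_notMem_range (∑ i, c i • bN i) hj
          refine Eq.trans ?_ h4.symm
          change bM.repr (q • x) j = 0 at h3
          rw [map_nsmul, Finsupp.smul_apply, nsmul_eq_mul] at h3
          exact (mul_eq_zero.1 h3).resolve_left (by exact_mod_cast hq.ne')
      rw [hx2]
      exact (∑ i, c i • bN i : AddSubgroup.toIntSubmodule H).2
    · intro h
      ext i
      refine (hz i _).2 ?_
      have h3 := S.repr_apply_embedding_eq_repr_smul ⟨x, h⟩ (i := i)
      change bM.repr x (f i) = _ at h3
      change a i ∣ bM.repr x (f i)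
      rw [h3]
      simp [S]
  have e1 : ((↥H →+ ℤ) ⧸ (resHom n H).range) ≃ (∀ i, ZMod (a i).natAbs) := by
    rw [← hΨk]
    exact (QuotientAddGroup.quotientKerEquivOfSurjective Ψ hΨs).toEquiv
  have e2 := (QuotientAddGroup.quotientKerEquivOfSurjective Φ hΦs).toEquiv
  refine ⟨Finite.of_equiv _ e1.symm, ?_⟩
  rw [← hΦk, AddSubgroup.index]
  exact Nat.card_congr (e1.trans e2.symm)
end

section
/- Let k be a field, let R := AddMonoidAlgebra k (ℤ × ℤ) be the Laurent polynomial ring in two variables over k, let B and W be finite types, and let f : (B → R) →ₗ[R] (W → R) be an injective R-linear map between the corresponding finite free R-modules. Then the cokernel module (W → R) / range(f) has no nonzero R-submodule of finite length; that is, every R-submodule of the cokernel which has finite length as an R-module is the zero submodule. (In the paper's language: the spectral transform is a pure sheaf of dimension one on the two-dimensional torus, having no subsheaves with zero-dimensional support.) -/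
open Polynomial in
/-- Over a Laurent polynomial ring, a monic polynomial is regular modulo a constant. -/
lemma laurent_dvd_aux {A : Type*} [CommRing A] (a : A) (g : A[X]) (hg : g.Monic)
    (c : LaurentPolynomial A)
    (h : LaurentPolynomial.C a ∣ toLaurent g * c) : LaurentPolynomial.C a ∣ c := by
  obtain ⟨d, hd⟩ := h
  obtain ⟨n, c', hc⟩ := LaurentPolynomial.exists_T_pow c
  obtain ⟨m, d', hd'⟩ := LaurentPolynomial.exists_T_pow d
  have key : X ^ m * g * c' = C a * (X ^ n * d') := by
    apply toLaurent_injective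
    simp only [map_mul, toLaurent_X_pow, toLaurent_C, hc, hd']
    linear_combination (LaurentPolynomial.T m * LaurentPolynomial.T n) * hd
  have hmon : (X ^ m * g).Monic := (monic_X_pow m).mul hg
  have h1 : (c'.map (Ideal.Quotient.mk (Ideal.span {a}))) = 0 := by
    have h2 := congrArg (Polynomial.map (Ideal.Quotient.mk (Ideal.span {a}))) key
    rw [Polynomial.map_mul, Polynomial.map_mul (p := C a), Polynomial.map_C] at h2
    have h3 : Ideal.Quotient.mk (Ideal.span {a}) a = 0 :=
      Ideal.Quotient.eq_zero_iff_mem.2 (Ideal.mem_span_singleton_self a)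
    rw [h3, map_zero, zero_mul] at h2
    exact ((hmon.map _).mul_right_eq_zero_iff).1 h2
  have h4 : C a ∣ c' := by
    rw [C_dvd_iff_dvd_coeff]
    intro i
    have := congrArg (fun r => r.coeff i) h1
    simp only [coeff_map, coeff_zero] at this
    exact Ideal.mem_span_singleton.1 (Ideal.Quotient.eq_zero_iff_mem.1 this)
  have h5 : LaurentPolynomial.C a ∣ c * LaurentPolynomial.T n := by
    rw [← hc, ← toLaurent_C]
    exact map_dvd _ h4
  exact ((LaurentPolynomial.isUnit_T (n : ℤ)).dvd_mul_right).1 h5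

open Polynomial in
/-- `p(x)` and `q(y)` form a regular sequence in the two-variable Laurent polynomial ring. -/
lemma laurent_two_dvd (k : Type) [Field k] (p q : k[X]) (hq : q.Monic)
    (c : AddMonoidAlgebra k (ℤ × ℤ))
    (h : aeval (AddMonoidAlgebra.single ((0 : ℤ), (1 : ℤ)) (1 : k)) p ∣
      aeval (AddMonoidAlgebra.single ((1 : ℤ), (0 : ℤ)) (1 : k)) q * c) :
    aeval (AddMonoidAlgebra.single ((0 : ℤ), (1 : ℤ)) (1 : k)) p ∣ c := by
  let e : AddMonoidAlgebra k (ℤ × ℤ) ≃ₐ[k] LaurentPolynomial (LaurentPolynomial k) :=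
    AddMonoidAlgebra.curryAlgEquiv k
  have hP : e (aeval (AddMonoidAlgebra.single ((0 : ℤ), (1 : ℤ)) (1 : k)) p) =
      LaurentPolynomial.C (aeval (LaurentPolynomial.T 1) p) := by
    rw [← aeval_algHom_apply, LaurentPolynomial.C_eq_algebraMap, ← aeval_algebraMap_apply]
    congr 2
    exact AddMonoidAlgebra.curryAlgEquiv_single ..
  have hQ : e (aeval (AddMonoidAlgebra.single ((1 : ℤ), (0 : ℤ)) (1 : k)) q) =
      toLaurent (q.map (algebraMap k (LaurentPolynomial k))) := by
    rw [← aeval_algHom_apply]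
    have : e (AddMonoidAlgebra.single ((1 : ℤ), (0 : ℤ)) (1 : k)) = LaurentPolynomial.T 1 :=
      AddMonoidAlgebra.curryAlgEquiv_single ..
    rw [this, ← aeval_map_algebraMap (LaurentPolynomial k), ← toLaurent_X,
      ← toLaurentAlg_apply, aeval_algHom_apply, aeval_X_left_apply, toLaurentAlg_apply]
  have h1 := laurent_dvd_aux (aeval (LaurentPolynomial.T 1) p) _
    (hq.map (algebraMap k (LaurentPolynomial k))) (e c) (by
      rw [← hP, ← hQ, ← map_mul]
      exact map_dvd e h)
  rw [← hP] at h1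
  exact (map_dvd_iff e).1 h1

open Polynomial in
lemma laurent_aeval_ne_zero (k : Type) [Field k] (p : k[X]) (hp : p ≠ 0) :
    aeval (AddMonoidAlgebra.single ((0 : ℤ), (1 : ℤ)) (1 : k)) p ≠ 0 := by
  intro h
  have h1 : aeval (LaurentPolynomial.T 1 : LaurentPolynomial k) p = 0 := by
    have := congrArg (AddMonoidAlgebra.mapDomainAlgHom k k (AddMonoidHom.snd ℤ ℤ)) h
    rw [← aeval_algHom_apply, map_zero] at this
    rw [← this]
    congr 2
    symm
    exact AddMonoidAlgebra.mapDomain_single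
  have h2 : aeval (LaurentPolynomial.T 1 : LaurentPolynomial k) p = toLaurent p := by
    rw [← toLaurent_X, ← toLaurentAlg_apply, aeval_algHom_apply, aeval_X_left_apply,
      toLaurentAlg_apply]
  rw [h2, toLaurent_eq_zero] at h1
  exact hp h1

/-- The cokernel of an injective map of finite free modules over the two-variable Laurent
polynomial ring `k[ℤ × ℤ]` has no nonzero submodule of finite length: the spectral transform
is a pure sheaf of dimension one. -/
theorem stmt_3 (k : Type) [Field k] (B W : Type) [Fintype B] [Fintype W]
    (f : (B → AddMonoidAlgebra k (ℤ × ℤ)) →ₗ[AddMonoidAlgebra k (ℤ × ℤ)]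
         (W → AddMonoidAlgebra k (ℤ × ℤ)))
    (hf : Function.Injective f)
    (N : Submodule (AddMonoidAlgebra k (ℤ × ℤ))
          ((W → AddMonoidAlgebra k (ℤ × ℤ)) ⧸ LinearMap.range f))
    (hN : IsFiniteLength (AddMonoidAlgebra k (ℤ × ℤ)) N) :
    N = ⊥ := by
  by_contra hne
  obtain ⟨-, hart⟩ := isFiniteLength_iff_isNoetherian_isArtinian.1 hN
  have : Nontrivial N := Submodule.nontrivial_iff_ne_bot.2 hne
  obtain ⟨S, hS⟩ := IsAtomic.exists_atom (Submodule (AddMonoidAlgebra k (ℤ × ℤ)) N)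
  have hsimp : IsSimpleModule _ S := isSimpleModule_iff_isAtom.2 hS
  have : Nontrivial S := IsSimpleModule.nontrivial (AddMonoidAlgebra k (ℤ × ℤ)) S
  obtain ⟨s, hs0⟩ := exists_ne (0 : S)
  have hmax := IsSimpleModule.ker_toSpanSingleton_isMaximal (AddMonoidAlgebra k (ℤ × ℤ)) (M := S) (m := s) hs0
  set I := LinearMap.ker (LinearMap.toSpanSingleton (AddMonoidAlgebra k (ℤ × ℤ)) S s) with hI
  letI : Field (AddMonoidAlgebra k (ℤ × ℤ) ⧸ I) := Ideal.Quotient.field I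
  have hft : Algebra.FiniteType k (AddMonoidAlgebra k (ℤ × ℤ) ⧸ I) := inferInstance
  have hfin : Module.Finite k (AddMonoidAlgebra k (ℤ × ℤ) ⧸ I) :=
    finite_of_finite_type_of_isJacobsonRing _ _
  have hex : ∀ z : AddMonoidAlgebra k (ℤ × ℤ), ∃ p : Polynomial k, p.Monic ∧
      Polynomial.aeval z p • s = 0 := by
    intro z
    refine ⟨minpoly k (Ideal.Quotient.mkₐ k I z),
      minpoly.monic (Algebra.IsIntegral.isIntegral _), ?_⟩
    have h := minpoly.aeval k (Ideal.Quotient.mkₐ k I z)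
    rw [Polynomial.aeval_algHom_apply] at h
    exact Ideal.Quotient.eq_zero_iff_mem.1 h
  obtain ⟨p, hp, hps⟩ := hex (AddMonoidAlgebra.single ((0 : ℤ), (1 : ℤ)) (1 : k))
  obtain ⟨q, hq, hqs⟩ := hex (AddMonoidAlgebra.single ((1 : ℤ), (0 : ℤ)) (1 : k))
  have hP0 := laurent_aeval_ne_zero k p hp.ne_zero
  have hreg := laurent_two_dvd k p q hq
  set P := Polynomial.aeval (AddMonoidAlgebra.single ((0 : ℤ), (1 : ℤ)) (1 : k)) p
  set Q := Polynomial.aeval (AddMonoidAlgebra.single ((1 : ℤ), (0 : ℤ)) (1 : k)) q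
  obtain ⟨w, hw⟩ := Submodule.Quotient.mk_surjective _ (s : N).1
  have hmem : ∀ r : AddMonoidAlgebra k (ℤ × ℤ), r • s = 0 → ∃ a, f a = r • w := by
    intro r hr
    have h1 : r • (s : N).1 = 0 := congrArg (fun t : S => (t : N).1) hr
    rw [← hw, ← Submodule.Quotient.mk_smul, Submodule.Quotient.mk_eq_zero] at h1
    exact h1
  obtain ⟨a, ha⟩ := hmem P hps
  obtain ⟨b, hb⟩ := hmem Q hqs
  have hab : Q • a = P • b := by
    apply hf
    rw [map_smul, map_smul, ha, hb, smul_comm]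
  have hdiv : ∀ i, ∃ t, a i = P * t := fun i => hreg (a i) ⟨b i, congrFun hab i⟩
  choose a' ha' using hdiv
  have haa : a = P • a' := funext ha'
  have hwa : f a' = w := by
    rw [haa, map_smul] at ha
    funext i
    exact mul_left_cancel₀ hP0 (congrFun ha i)
  apply hs0
  apply Subtype.ext
  apply Subtype.ext
  rw [← hw]
  exact (Submodule.Quotient.mk_eq_zero _).2 ⟨a', hwa⟩
end

section
/- Let R be a commutative ring, n a finite type, and K : Matrix n n R a square matrix, inducing the R-linear map K.mulVecLin : (n → R) →ₗ[R] (n → R). Then for every prime ideal p of R, the localization of the cokernel module (n → R) / range(K.mulVecLin) at p is nonzero if and only if det K ∈ p. Equivalently, the support of the cokernel module equals the zero locus of the determinant: Module.support R ((n → R) / range(K.mulVecLin)) = { p ∈ Spec R | det K ∈ p }. (This expresses that the spectral transform is supported on the spectral curve, the vanishing locus of det K.) -/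
theorem support_aux (R : Type) [CommRing R] (n : Type) [Fintype n] [DecidableEq n]
    (K : Matrix n n R) (p : PrimeSpectrum R) :
    p ∈ Module.support R ((n → R) ⧸ LinearMap.range K.mulVecLin) ↔ K.det ∈ p.asIdeal := by
  rw [Module.mem_support_iff_of_finite]
  constructor
  · intro h
    apply h
    rw [Module.mem_annihilator]
    intro m
    obtain ⟨v, rfl⟩ := Submodule.mkQ_surjective _ m
    rw [← map_smul, Submodule.mkQ_apply, Submodule.Quotient.mk_eq_zero]
    refine ⟨K.adjugate.mulVec v, ?_⟩
    rw [Matrix.mulVecLin_apply, Matrix.mulVec_mulVec, Matrix.mul_adjugate, Matrix.smul_mulVec,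
      Matrix.one_mulVec]
  · intro h r hr
    rw [Module.mem_annihilator] at hr
    have key : ∀ i : n, ∃ v : n → R, K.mulVec v = r • (Pi.single i 1 : n → R) := by
      intro i
      have h1 := hr (Submodule.mkQ _ (Pi.single i 1 : n → R))
      rw [← map_smul, Submodule.mkQ_apply, Submodule.Quotient.mk_eq_zero] at h1
      exact h1
    choose B hB using key
    have hKB : K * (Matrix.of B).transpose = r • (1 : Matrix n n R) := by
      ext i j
      have h2 := congrFun (hB j) i
      simpa [Matrix.mul_apply, Matrix.mulVec, dotProduct, Matrix.one_apply, Pi.single_apply]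
        using h2
    have hd := congrArg Matrix.det hKB
    rw [Matrix.det_mul, Matrix.det_smul, Matrix.det_one, mul_one] at hd
    apply p.2.mem_of_pow_mem (Fintype.card n)
    rw [← hd]
    exact p.asIdeal.mul_mem_right _ h


/-- The support of the cokernel of a square matrix `K` equals the vanishing locus of `det K`:
the spectral transform is supported on the spectral curve. -/
theorem stmt_4 (R : Type) [CommRing R] (n : Type) [Fintype n] [DecidableEq n]
    (K : Matrix n n R) :
    (∀ p : PrimeSpectrum R,
        Nontrivial (LocalizedModule p.asIdeal.primeCompl
          ((n → R) ⧸ LinearMap.range K.mulVecLin)) ↔ K.det ∈ p.asIdeal) ∧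
      Module.support R ((n → R) ⧸ LinearMap.range K.mulVecLin) =
        {p : PrimeSpectrum R | K.det ∈ p.asIdeal} := by

  exact ⟨fun p => support_aux R n K p, Set.ext fun p => support_aux R n K p⟩
end

section
/- Let k be a field and R := AddMonoidAlgebra k (ℤ × ℤ) the Laurent polynomial ring in two variables over k, with monomial X^m denoting the element single m 1 for m ∈ ℤ × ℤ. Fix a bipartite weighting datum: finite types B, W, E, endpoint maps β : E → B and ω : E → W, edge weights ℓ : E → kˣ, Kasteleyn signs κ : E → kˣ, and exponents d : E → ℤ × ℤ. Let K(d) : Matrix W B R be the Kasteleyn matrix with entries K(d) w b = Σ over edges e with β e = b and ω e = w of (ℓ e * κ e : k) • X^(d e). Suppose h_B : B → ℤ × ℤ and h_W : W → ℤ × ℤ are arbitrary and d' : E → ℤ × ℤ is defined by d' e = d e + h_W(ω e) − h_B(β e). Then the cokernels of the induced linear maps (B → R) →ₗ[R] (W → R) of K(d') and K(d) are isomorphic as R-modules. (Changing the curves γ_x, γ_y within their homology classes changes the exponents by such a coboundary, so the spectral transform is independent of the choice of γ_x and γ_y.) -/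
/-- The Kasteleyn matrix of a bipartite weighting datum: its `(w, b)` entry is the sum over
edges `e` with black endpoint `b` and white endpoint `w` of `(ℓ e * κ e) • X^(d e)` in the
Laurent polynomial ring `R = k[ℤ × ℤ]`. -/
noncomputable def kasteleyn {k : Type} [Field k] {B W E : Type} [Fintype E]
    [DecidableEq B] [DecidableEq W]
    (β : E → B) (ω : E → W) (ℓ κ : E → kˣ) (d : E → ℤ × ℤ) :
    Matrix W B (AddMonoidAlgebra k (ℤ × ℤ)) :=
  fun w b => ∑ e ∈ Finset.univ.filter fun e => β e = b ∧ ω e = w,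
    ((ℓ e * κ e : kˣ) : k) • AddMonoidAlgebra.single (d e) (1 : k)

/-- The monomial `X^m` as a unit of the Laurent polynomial ring. -/
noncomputable def monoUnit (k : Type) [Field k] (m : ℤ × ℤ) :
    (AddMonoidAlgebra k (ℤ × ℤ))ˣ where
  val := AddMonoidAlgebra.single m 1
  inv := AddMonoidAlgebra.single (-m) 1
  val_inv := by simp [AddMonoidAlgebra.single_mul_single, AddMonoidAlgebra.one_def]
  inv_val := by simp [AddMonoidAlgebra.single_mul_single, AddMonoidAlgebra.one_def]

/-- Diagonal rescaling of a free module by monomials. -/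
noncomputable def monoScale (k : Type) [Field k] {I : Type} (h : I → ℤ × ℤ) :
    (I → AddMonoidAlgebra k (ℤ × ℤ)) ≃ₗ[AddMonoidAlgebra k (ℤ × ℤ)]
      (I → AddMonoidAlgebra k (ℤ × ℤ)) :=
  LinearEquiv.piCongrRight fun i => LinearEquiv.smulOfUnit (monoUnit k (h i))

theorem monoScale_apply (k : Type) [Field k] {I : Type} (h : I → ℤ × ℤ)
    (v : I → AddMonoidAlgebra k (ℤ × ℤ)) (i : I) :
    monoScale k h v i = AddMonoidAlgebra.single (h i) (1 : k) * v i := rfl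

theorem kasteleyn_gauge {k : Type} [Field k] {B W E : Type} [Fintype E]
    [DecidableEq B] [DecidableEq W]
    (β : E → B) (ω : E → W) (ℓ κ : E → kˣ) (d : E → ℤ × ℤ)
    (hB : B → ℤ × ℤ) (hW : W → ℤ × ℤ) (w : W) (b : B) :
    AddMonoidAlgebra.single (-hW w) (1 : k) *
      kasteleyn β ω ℓ κ (fun e => d e + hW (ω e) - hB (β e)) w b =
    kasteleyn β ω ℓ κ d w b * AddMonoidAlgebra.single (-hB b) (1 : k) := by
  unfold kasteleyn
  rw [Finset.mul_sum, Finset.sum_mul]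
  refine Finset.sum_congr rfl fun e he => ?_
  obtain ⟨rfl, rfl⟩ := (Finset.mem_filter.mp he).2
  rw [mul_smul_comm, smul_mul_assoc, AddMonoidAlgebra.single_mul_single,
    AddMonoidAlgebra.single_mul_single]
  congr 2
  ext <;> simp only [Prod.fst_add, Prod.snd_add, Prod.fst_sub, Prod.snd_sub, Prod.fst_neg, Prod.snd_neg] <;> ring

/-- The spectral transform (cokernel of the Kasteleyn operator) is unchanged, up to
isomorphism of `R`-modules, by changing the exponents `d` by a coboundary (i.e. moving the
curves `γ_x`, `γ_y` within their homology classes). -/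
theorem stmt_6 (k : Type) [Field k] (B W E : Type)
    [Fintype B] [Fintype W] [Fintype E] [DecidableEq B] [DecidableEq W]
    (β : E → B) (ω : E → W) (ℓ κ : E → kˣ) (d : E → ℤ × ℤ)
    (hB : B → ℤ × ℤ) (hW : W → ℤ × ℤ) :
    Nonempty (
      ((W → AddMonoidAlgebra k (ℤ × ℤ)) ⧸
        LinearMap.range
          (kasteleyn β ω ℓ κ (fun e => d e + hW (ω e) - hB (β e))).mulVecLin)
      ≃ₗ[AddMonoidAlgebra k (ℤ × ℤ)]
      ((W → AddMonoidAlgebra k (ℤ × ℤ)) ⧸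
        LinearMap.range (kasteleyn β ω ℓ κ d).mulVecLin)) := by
  refine ⟨Submodule.Quotient.equiv _ _ (monoScale k fun w => -hW w) ?_⟩
  have key : (monoScale k fun w => -hW w).toLinearMap ∘ₗ
      (kasteleyn β ω ℓ κ (fun e => d e + hW (ω e) - hB (β e))).mulVecLin =
      (kasteleyn β ω ℓ κ d).mulVecLin ∘ₗ (monoScale k fun b => -hB b).toLinearMap := by
    refine LinearMap.ext fun v => funext fun w => ?_
    simp only [LinearMap.comp_apply, LinearEquiv.coe_coe, monoScale_apply,
      Matrix.mulVecLin_apply, Matrix.mulVec, dotProduct, Finset.mul_sum]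
    refine Finset.sum_congr rfl fun b _ => ?_
    rw [← mul_assoc, kasteleyn_gauge, mul_assoc]
  have h := congrArg LinearMap.range key
  rw [LinearMap.range_comp, LinearEquiv.range_comp] at h
  exact h
end

section
/- Let k be a field and R := AddMonoidAlgebra k (ℤ × ℤ) the Laurent polynomial ring in two variables over k, with monomial X^m denoting the element single m 1 for m ∈ ℤ × ℤ. Fix a bipartite weighting datum on a common finite index type: B = W = Fin n, a finite edge type E, endpoint maps β : E → Fin n and ω : E → Fin n, edge weights ℓ : E → kˣ, Kasteleyn signs κ : E → kˣ, and exponents d : E → ℤ × ℤ, and let K(ℓ, d) : Matrix (Fin n) (Fin n) R be the Kasteleyn matrix with entries K w b = Σ over edges e with β e = b and ω e = w of (ℓ e * κ e : k) • X^(d e). Given gauge data g_B, g_W : Fin n → kˣ and coboundary data h_B, h_W : Fin n → ℤ × ℤ, set ℓ' e = g_W(ω e) * ℓ e * (g_B(β e))⁻¹ and d' e = d e + h_W(ω e) − h_B(β e). Then det K(ℓ', d') = c • X^m * det K(ℓ, d), where c = (∏_w g_W w) * (∏_b g_B b)⁻¹ ∈ kˣ and m = (Σ_w h_W w) − (Σ_b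 h_B b) ∈ ℤ × ℤ. In particular the determinant of the Kasteleyn matrix is well defined up to multiplication by a unit of R, so the spectral curve { det K = 0 } and the Goncharov–Kenyon Hamiltonians (the coefficients of det K) are well defined up to an overall unit. -/
/-- Under a gauge transformation of the weights and a coboundary change of the exponents,
the determinant of the Kasteleyn matrix changes by multiplication by the unit `c • X^m`,
where `c = (∏ w, g_W w) * (∏ b, g_B b)⁻¹` and `m = (∑ w, h_W w) − (∑ b, h_B b)`. -/
theorem stmt_7 (k : Type) [Field k] (n : ℕ) (E : Type) [Fintype E]
    (β ω : E → Fin n) (ℓ κ : E → kˣ) (d : E → ℤ × ℤ)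
    (gB gW : Fin n → kˣ) (hB hW : Fin n → ℤ × ℤ) :
    (kasteleyn β ω (fun e => gW (ω e) * ℓ e * (gB (β e))⁻¹) κ
        (fun e => d e + hW (ω e) - hB (β e))).det
      = (((∏ w, gW w) * (∏ b, gB b)⁻¹ : kˣ) : k) •
          AddMonoidAlgebra.single ((∑ w, hW w) - (∑ b, hB b)) (1 : k) *
        (kasteleyn β ω ℓ κ d).det := by
  have key : kasteleyn β ω (fun e => gW (ω e) * ℓ e * (gB (β e))⁻¹) κ
        (fun e => d e + hW (ω e) - hB (β e))
      = Matrix.diagonal (fun w => AddMonoidAlgebra.single (hW w) ((gW w : kˣ) : k)) *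
          kasteleyn β ω ℓ κ d *
        Matrix.diagonal (fun b => AddMonoidAlgebra.single (-hB b) (((gB b)⁻¹ : kˣ) : k)) := by
    ext1 w b
    rw [Matrix.mul_diagonal, Matrix.diagonal_mul]
    unfold kasteleyn
    rw [Finset.mul_sum, Finset.sum_mul]
    refine Finset.sum_congr rfl fun e he => ?_
    obtain ⟨rfl, rfl⟩ := (Finset.mem_filter.mp he).2
    simp only [AddMonoidAlgebra.smul_single, AddMonoidAlgebra.single_mul_single, smul_eq_mul,
      mul_one, Units.val_mul]
    congr 1
    · abel
    · ring
  have prodSingle : ∀ (h : Fin n → ℤ × ℤ) (g : Fin n → kˣ),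
      ∏ i, AddMonoidAlgebra.single (h i) ((g i : kˣ) : k)
        = AddMonoidAlgebra.single (∑ i, h i) ((∏ i, g i : kˣ) : k) := by
    intro h g
    induction (Finset.univ : Finset (Fin n)) using Finset.induction_on with
    | empty => simp [AddMonoidAlgebra.one_def]
    | insert a s ha ih =>
      rw [Finset.prod_insert ha, Finset.prod_insert ha, Finset.sum_insert ha, ih,
        AddMonoidAlgebra.single_mul_single, Units.val_mul]
  rw [key, Matrix.det_mul, Matrix.det_mul, Matrix.det_diagonal, Matrix.det_diagonal,
    prodSingle, prodSingle (fun b => -hB b) (fun b => (gB b)⁻¹), mul_right_comm,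
    AddMonoidAlgebra.single_mul_single, AddMonoidAlgebra.smul_single, smul_eq_mul, mul_one,
    Finset.prod_inv_distrib, ← Units.val_mul, Finset.sum_neg_distrib, sub_eq_add_neg]
end

section
/- Let k be a field and R := AddMonoidAlgebra k (ℤ × ℤ) the Laurent polynomial ring in two variables over k, with monomial X^m denoting the element single m 1 for m ∈ ℤ × ℤ. Fix a bipartite weighting datum on a common finite index type: B = W = Fin n, a finite edge type E, endpoint maps β, ω : E → Fin n, edge weights ℓ : E → kˣ, Kasteleyn signs κ : E → kˣ, and exponents d : E → ℤ × ℤ, and let K : Matrix (Fin n) (Fin n) R be the Kasteleyn matrix with entries K w b = Σ over edges e with β e = b and ω e = w of (ℓ e * κ e : k) • X^(d e). Then det K = Σ over all perfect matchings of the weighted products: explicitly, det K equals the sum over all functions μ : Fin n → E satisfying β(μ b) = b for all b and such that b ↦ ω(μ b) is a bijection of Fin n, of sign(σ_μ) * (∏_b (ℓ(μ b) * κ(μ b) : k)) • X^(Σ_b d(μ b)), where σ_μ is the permutation of Fin n given by b ↦ ω(μ b). (Thus the coefficients of det K are signed weighted counts of perfect matchings of the bipartite graph, i.e., the summands of the dimer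 partition function organized by homology class.) -/
/-- The determinant of the Kasteleyn matrix is the signed sum over perfect matchings of the
weighted monomials: the dimer partition function. A perfect matching is a choice
`μ : Fin n → E` of an edge at each black vertex (`β (μ b) = b`) whose white endpoints
`b ↦ ω (μ b)` form a bijection. -/
theorem stmt_10 (k : Type) [Field k] (n : ℕ) (E : Type) [Fintype E]
    (β ω : E → Fin n) (ℓ κ : E → kˣ) (d : E → ℤ × ℤ) :
    (kasteleyn β ω ℓ κ d).det
      = ∑ μ : Fin n → E,
          if h : (∀ b, β (μ b) = b) ∧ Function.Bijective (fun b => ω (μ b)) then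
            (Equiv.Perm.sign (Equiv.ofBijective (fun b => ω (μ b)) h.2) : ℤ) •
              ((∏ b, ((ℓ (μ b) * κ (μ b) : kˣ) : k)) •
                AddMonoidAlgebra.single (∑ b, d (μ b)) (1 : k))
          else 0 := by
  rw [Matrix.det_apply]
  have h1 : ∀ σ : Equiv.Perm (Fin n), ∏ i, kasteleyn β ω ℓ κ d (σ i) i
      = ∑ μ : Fin n → E, ∏ i, if β (μ i) = i ∧ ω (μ i) = σ i then
          ((ℓ (μ i) * κ (μ i) : kˣ) : k) • AddMonoidAlgebra.single (d (μ i)) (1 : k) else 0 := by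
    intro σ
    simp only [kasteleyn, Finset.sum_filter]
    rw [Finset.prod_univ_sum, Fintype.piFinset_univ]
  have h2 : ∀ μ : Fin n → E,
      ∏ b, (((ℓ (μ b) * κ (μ b) : kˣ) : k) • AddMonoidAlgebra.single (d (μ b)) (1 : k))
      = (∏ b, ((ℓ (μ b) * κ (μ b) : kˣ) : k)) •
          AddMonoidAlgebra.single (∑ b, d (μ b)) (1 : k) := by
    intro μ
    rw [Finset.prod_smul]
    congr 1
    have := map_prod (AddMonoidAlgebra.of k (ℤ × ℤ))
      (fun b => Multiplicative.ofAdd (d (μ b))) Finset.univ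
    rw [← ofAdd_sum] at this
    simpa using this.symm
  simp only [h1, Finset.smul_sum]
  rw [Finset.sum_comm]
  refine Finset.sum_congr rfl fun μ _ => ?_
  split_ifs with h
  · rw [Finset.sum_eq_single (Equiv.ofBijective (fun b => ω (μ b)) h.2)]
    · rw [← h2, Units.smul_def]
      congr 1
      refine Finset.prod_congr rfl fun i _ => ?_
      rw [if_pos ⟨h.1 i, rfl⟩]
    · intro σ _ hσ
      obtain ⟨i, hi⟩ : ∃ i, ω (μ i) ≠ σ i := by
        by_contra hc
        push Not at hc
        exact hσ (Equiv.ext fun i => (hc i).symm)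
      rw [Finset.prod_eq_zero (Finset.mem_univ i) (if_neg fun hh => hi hh.2), smul_zero]
    · intro hh
      exact absurd (Finset.mem_univ _) hh
  · refine Finset.sum_eq_zero fun σ _ => ?_
    obtain ⟨i, hi⟩ : ∃ i, ¬ (β (μ i) = i ∧ ω (μ i) = σ i) := by
      by_contra hc
      push Not at hc
      refine h ⟨fun b => (hc b).1, ?_⟩
      have : (fun b => ω (μ b)) = σ := funext fun b => (hc b).2
      rw [this]
      exact σ.bijective
    rw [Finset.prod_eq_zero (Finset.mem_univ i) (if_neg hi), smul_zero]
end
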